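/- arXiv:0804.0758 — 6 statements merged into one kernel-verified Lean document; each statement's English description precedes it below -/
import Mathlib

section
/- Let m ≥ 1, let U ⊆ ℝ^m be open, and let σ : U → M_m(ℝ) be differentiable with σ(x) invertible for every x ∈ U. Then the following two conditions are equivalent at every x ∈ U: (a) for all i ∈ {1,…,m} and all j, k ∈ {1,…,m} with k > j, ∑_{l=1}^m (∂σ_{ik}/∂x_l)(x) σ_{lj}(x) = ∑_{l=1}^m (∂σ_{ij}/∂x_l)(x) σ_{lk}(x); (b) for all i, j, k ∈ {1,…,m}, ∂[σ(x)^{-1}]_{ij}/∂x_k = ∂[σ(x)^{-1}]_{ik}/∂x_j. -/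
/-- Partial derivative of a scalar function on `Fin m → ℝ` in the `k`-th coordinate
direction. -/
noncomputable def pderiv1 {m : ℕ} (f : (Fin m → ℝ) → ℝ) (k : Fin m) (x : Fin m → ℝ) : ℝ :=
  fderiv ℝ f x (Pi.single k 1)

/-!
Since `D(σ⁻¹)(p) = -σ⁻¹ · Dσ(p) · σ⁻¹`, one has `D(σ⁻¹)(σ v) (σ w) = -σ⁻¹ (Dσ(σ v) w)`. As `σ` is
invertible, the bilinear map `(v, w) ↦ Dσ(σ v) w` is symmetric if and only if
`(p, q) ↦ D(σ⁻¹)(p) q` is. On pairs of standard basis vectors these two symmetries read (9)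
and (10).
-/

open Matrix

theorem forall_lt_eq_swap_iff {α β : Type*} [LinearOrder α] {f : α → α → β} :
    (∀ a b, a < b → f a b = f b a) ↔ ∀ a b, f a b = f b a := by
  refine ⟨fun h a b => ?_, fun h a b _ => h a b⟩
  rcases lt_trichotomy a b with hab | rfl | hba
  · exact h a b hab
  · rfl
  · exact (h b a hba).symm

section LinearAlgebra

variable {R m n : Type*} [Fintype n] [DecidableEq n]

theorem sum_apply_single_mul [CommSemiring R] (f : (n → R) →ₗ[R] R) (v : n → R) :
    ∑ l, f (Pi.single l 1) * v l = f v := by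
  conv_rhs => rw [pi_eq_sum_univ' v]
  simp [mul_comm]

theorem forall_mulVec_comm_iff_single [CommSemiring R] (L : (n → R) →ₗ[R] Matrix m n R) :
    (∀ v w, L v *ᵥ w = L w *ᵥ v) ↔
      ∀ i j k, L (Pi.single j 1) i k = L (Pi.single k 1) i j := by
  let B : (n → R) →ₗ[R] (n → R) →ₗ[R] m → R := mulVecBilin R R ∘ₗ L
  calc (∀ v w, L v *ᵥ w = L w *ᵥ v)
      ↔ B = B.flip := by simp only [LinearMap.ext_iff₂]; rfl
    _ ↔ ∀ j k, L (Pi.single j 1) *ᵥ Pi.single k 1 = L (Pi.single k 1) *ᵥ Pi.single j 1 := by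
      simp [LinearMap.ext_iff_basis (Pi.basisFun R n) (Pi.basisFun R n), B]
    _ ↔ ∀ i j k, L (Pi.single j 1) i k = L (Pi.single k 1) i j := by
      simp only [mulVec_single_one, funext_iff, col_apply]
      exact ⟨fun h i j k => h j k i, fun h j k i => h i j k⟩

theorem forall_mulVec_comm_iff_of_eq_neg_inv_mul_mul_inv [CommRing R] {S : Matrix n n R}
    (hS : IsUnit S) {D E : (n → R) → Matrix n n R} (hE : ∀ p, E p = -(S⁻¹ * D p * S⁻¹)) :
    (∀ v w, D (S *ᵥ v) *ᵥ w = D (S *ᵥ w) *ᵥ v) ↔ ∀ p q, E p *ᵥ q = E q *ᵥ p := by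
  have E_mulVec (p w : n → R) : E p *ᵥ (S *ᵥ w) = -(S⁻¹ *ᵥ (D p *ᵥ w)) := by
    simp [hE, neg_mulVec, Matrix.mul_assoc,
      nonsing_inv_mul S ((isUnit_iff_isUnit_det S).1 hS)]
  have surjective_S : Function.Surjective S.mulVec := mulVec_surjective_iff_isUnit.2 hS
  have injective_inv : Function.Injective S⁻¹.mulVec :=
    mulVec_injective_of_isUnit (isUnit_nonsing_inv_iff.2 hS)
  refine Iff.trans ?_ surjective_S.forall₂.symm
  simp only [E_mulVec, neg_inj, injective_inv.eq_iff]

end LinearAlgebra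

section Calculus

variable {𝕜 E m n : Type*} [NontriviallyNormedField 𝕜] [NormedAddCommGroup E] [NormedSpace 𝕜 E]
  {x : E}

theorem fderiv_fun_ringInverse_apply {R : Type*} [NormedRing R] [HasSummableGeomSeries R]
    [NormedAlgebra 𝕜 R] {f : E → R} (hf : DifferentiableAt 𝕜 f x) (hx : IsUnit (f x)) (v : E) :
    fderiv 𝕜 (fun y => Ring.inverse (f y)) x v =
      -(Ring.inverse (f x) * fderiv 𝕜 f x v * Ring.inverse (f x)) := by
  obtain ⟨u, hu⟩ := hx
  have hinv : HasFDerivAt Ring.inverse _ (f x) := hu ▸ hasFDerivAt_ringInverse (𝕜 := 𝕜) u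
  have hcomp : HasFDerivAt (fun y => Ring.inverse (f y)) _ x := hinv.comp x hf.hasFDerivAt
  rw [hcomp.fderiv]
  simp [← hu]

theorem differentiableAt_matrix [Finite n] {A : E → Matrix m n 𝕜} :
    DifferentiableAt 𝕜 A x ↔ ∀ i j, DifferentiableAt 𝕜 (fun y => A y i j) x := by
  cases nonempty_fintype n
  exact differentiableAt_pi.trans (forall_congr' fun _ => differentiableAt_pi)

theorem fderiv_matrix_entry [Finite n] {A : E → Matrix m n 𝕜} (hA : DifferentiableAt 𝕜 A x)
    (i : m) (j : n) (v : E) : fderiv 𝕜 (fun y => A y i j) x v = fderiv 𝕜 A x v i j := by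
  cases nonempty_fintype n
  have hrow := hasFDerivAt_pi'.1 hA.hasFDerivAt i
  rw [(hasFDerivAt_pi'.1 hrow j).fderiv]
  rfl

variable [Fintype n] [DecidableEq n] [CompleteSpace 𝕜]

open scoped Matrix.Norms.Operator in
theorem hasSummableGeomSeries_matrix : HasSummableGeomSeries (Matrix n n 𝕜) :=
  -- The uniformity of the operator norm is the product one only after unfolding, so instance
  -- search does not find its completeness.
  have : @CompleteSpace (Matrix n n 𝕜) PseudoMetricSpace.toUniformSpace :=
    inferInstanceAs (CompleteSpace (n → n → 𝕜))
  inferInstance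

theorem differentiableAt_matrix_inv {A : E → Matrix n n 𝕜} (hA : DifferentiableAt 𝕜 A x)
    (hx : IsUnit (A x)) : DifferentiableAt 𝕜 (fun y => (A y)⁻¹) x := by
  have := hasSummableGeomSeries_matrix (𝕜 := 𝕜) (n := n)
  simp only [nonsing_inv_eq_ringInverse]
  open scoped Matrix.Norms.Operator in exact DifferentiableAt.inverse hA hx

theorem fderiv_matrix_inv_apply {A : E → Matrix n n 𝕜} (hA : DifferentiableAt 𝕜 A x)
    (hx : IsUnit (A x)) (v : E) :
    fderiv 𝕜 (fun y => (A y)⁻¹) x v = -((A x)⁻¹ * fderiv 𝕜 A x v * (A x)⁻¹) := by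
  have := hasSummableGeomSeries_matrix (𝕜 := 𝕜) (n := n)
  simp only [nonsing_inv_eq_ringInverse]
  open scoped Matrix.Norms.Operator in exact fderiv_fun_ringInverse_apply hA hx v

end Calculus

theorem condition_nine_iff_condition_ten_general {𝕜 n : Type*} [NontriviallyNormedField 𝕜]
    [CompleteSpace 𝕜] [Fintype n] [LinearOrder n] {σ : (n → 𝕜) → Matrix n n 𝕜} {x : n → 𝕜}
    (hσ : ∀ i j, DifferentiableAt 𝕜 (fun y => σ y i j) x) (hx : IsUnit (σ x)) :
    (∀ i j k, j < k →
        ∑ l, fderiv 𝕜 (fun y => σ y i k) x (Pi.single l 1) * σ x l j =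
          ∑ l, fderiv 𝕜 (fun y => σ y i j) x (Pi.single l 1) * σ x l k) ↔
      ∀ i j k, fderiv 𝕜 (fun y => (σ y)⁻¹ i j) x (Pi.single k 1) =
        fderiv 𝕜 (fun y => (σ y)⁻¹ i k) x (Pi.single j 1) := by
  have hσ' : DifferentiableAt 𝕜 σ x := differentiableAt_matrix.2 hσ
  let D : (n → 𝕜) →ₗ[𝕜] Matrix n n 𝕜 := fderiv 𝕜 σ x
  let E : (n → 𝕜) →ₗ[𝕜] Matrix n n 𝕜 := fderiv 𝕜 (fun y => (σ y)⁻¹) x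
  have nine_entry (i j k : n) : ∑ l, fderiv 𝕜 (fun y => σ y i k) x (Pi.single l 1) * σ x l j =
      (D ∘ₗ (σ x).mulVecLin) (Pi.single j 1) i k := by
    simpa [D, fderiv_matrix_entry hσ'] using!
      sum_apply_single_mul (fderiv 𝕜 (fun y => σ y i k) x : (n → 𝕜) →ₗ[𝕜] 𝕜) ((σ x).col j)
  have ten_entry (i j k : n) :
      fderiv 𝕜 (fun y => (σ y)⁻¹ i j) x (Pi.single k 1) = E (Pi.single k 1) i j :=
    fderiv_matrix_entry (differentiableAt_matrix_inv hσ' hx) i j _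
  simp only [nine_entry, ten_entry]
  calc _ ↔ ∀ v w, D (σ x *ᵥ v) *ᵥ w = D (σ x *ᵥ w) *ᵥ v :=
        (forall_congr' fun _ => forall_lt_eq_swap_iff).trans
          (forall_mulVec_comm_iff_single (D ∘ₗ (σ x).mulVecLin)).symm
    _ ↔ ∀ p q, E p *ᵥ q = E q *ᵥ p :=
        forall_mulVec_comm_iff_of_eq_neg_inv_mul_mul_inv hx (fderiv_matrix_inv_apply hσ' hx)
    _ ↔ _ := (forall_mulVec_comm_iff_single E).trans (forall_congr' fun _ => forall_comm)

/-- Equivalence of conditions (9) and (10) in Proposition 1 of the paper: for a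
differentiable, pointwise invertible matrix field `σ` on an open set `U ⊆ ℝ^m`, the
condition `∑_l (∂σ_{ik}/∂x_l) σ_{lj} = ∑_l (∂σ_{ij}/∂x_l) σ_{lk}` (for `k > j`) is
equivalent, at every point of `U`, to `∂[σ⁻¹]_{ij}/∂x_k = ∂[σ⁻¹]_{ik}/∂x_j`. -/
theorem condition_nine_iff_condition_ten
    (m : ℕ) (hm : 1 ≤ m) (U : Set (Fin m → ℝ)) (hUopen : IsOpen U)
    (σ : (Fin m → ℝ) → Matrix (Fin m) (Fin m) ℝ)
    (hσdiff : ∀ i j : Fin m, DifferentiableOn ℝ (fun x => σ x i j) U)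
    (hσinv : ∀ x ∈ U, IsUnit (σ x)) :
    ∀ x ∈ U,
      ((∀ i j k : Fin m, j < k →
          ∑ l : Fin m, pderiv1 (fun x => σ x i k) l x * σ x l j =
            ∑ l : Fin m, pderiv1 (fun x => σ x i j) l x * σ x l k) ↔
        (∀ i j k : Fin m,
          pderiv1 (fun x => (σ x)⁻¹ i j) k x = pderiv1 (fun x => (σ x)⁻¹ i k) j x)) := by
  intro x hx
  exact condition_nine_iff_condition_ten_general
    (fun i j => (hσdiff i j).differentiableAt (hUopen.mem_nhds hx)) (hσinv x hx)
end

section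
/- Let a, b, c : ℝ → ℝ be C^∞ functions with a(x₁) ≠ 0 and c(x₂) ≠ 0 for all x₁, x₂ ∈ ℝ, and define σ : ℝ² → M₂(ℝ) by σ(x₁,x₂) = [[a(x₁), a(x₁)b(x₂)],[0, c(x₂)]]. Then σ(x) is invertible for every x ∈ ℝ², σ(x)^{-1} = [[1/a(x₁), −b(x₂)/c(x₂)],[0, 1/c(x₂)]], and condition (R) holds: for all x ∈ ℝ² and all i, j, k ∈ {1,2}, ∂[σ(x)^{-1}]_{ij}/∂x_k = ∂[σ(x)^{-1}]_{ik}/∂x_j. -/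
/-- Partial derivative of a scalar function on `Fin 2 → ℝ` in the `k`-th coordinate
direction. -/
noncomputable def pderiv3 (f : (Fin 2 → ℝ) → ℝ) (k : Fin 2) (x : Fin 2 → ℝ) : ℝ :=
  fderiv ℝ f x (Pi.single k 1)

/-! Dividing by the determinant `a(x₁) c(x₂)` cancels the factor `a(x₁)` of the off-diagonal entry,
so the `j`-th column of `σ(x)⁻¹` depends on `x_j` alone. Hence both sides of (R) vanish when
`j ≠ k`, and they coincide when `j = k`. -/

section TriangularMatrix

variable {K : Type*} [Field K] {a d : K}

theorem isUnit_upperTriangular_fin_two_iff {e : K} :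
    IsUnit !![a, e; 0, d] ↔ a ≠ 0 ∧ d ≠ 0 := by
  rw [Matrix.isUnit_iff_isUnit_det, Matrix.det_fin_two_of, mul_zero, sub_zero, isUnit_iff_ne_zero,
    mul_ne_zero_iff]

theorem inv_upperTriangular_fin_two (ha : a ≠ 0) (hd : d ≠ 0) (e : K) :
    !![a, e; 0, d]⁻¹ = !![1 / a, -e / (a * d); 0, 1 / d] := by
  apply Matrix.inv_eq_right_inv
  rw [Matrix.mul_fin_two, Matrix.one_fin_two]
  congr 3 <;> field_simp <;> simp [ha, hd]

end TriangularMatrix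

section PartialDerivatives

variable {𝕜 ι : Type*} [NontriviallyNormedField 𝕜] [Finite ι] [DecidableEq ι]

theorem fderiv_comp_eval_single_of_ne {E : ι → Type*} {F : Type*}
    [∀ i, NormedAddCommGroup (E i)] [∀ i, NormedSpace 𝕜 (E i)]
    [NormedAddCommGroup F] [NormedSpace 𝕜 F] {j k : ι} {g : E j → F} {x : ∀ i, E i}
    (hg : DifferentiableAt 𝕜 g (x j)) (hjk : j ≠ k) (v : E k) :
    fderiv 𝕜 (fun y : ∀ i, E i => g (y j)) x (Pi.single k v) = 0 := by
  have := Fintype.ofFinite ι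
  have hasFDerivAt_comp : HasFDerivAt (fun y : ∀ i, E i => g (y j))
      ((fderiv 𝕜 g (x j)).comp (ContinuousLinearMap.proj j)) x :=
    hg.hasFDerivAt.comp x (hasFDerivAt_apply j x)
  simp [hasFDerivAt_comp.fderiv, hjk]

theorem fderiv_single_comm_of_column_eq_comp_eval {m F : Type*}
    [NormedAddCommGroup F] [NormedSpace 𝕜 F] {M : (ι → 𝕜) → Matrix m ι F} {g : m → ι → 𝕜 → F}
    (hM : ∀ y i j, M y i j = g i j (y j)) {x : ι → 𝕜}
    (hg : ∀ i j, DifferentiableAt 𝕜 (g i j) (x j)) (i : m) (j k : ι) :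
    fderiv 𝕜 (fun y => M y i j) x (Pi.single k 1) =
      fderiv 𝕜 (fun y => M y i k) x (Pi.single j 1) := by
  obtain rfl | hjk := eq_or_ne j k
  · rfl
  · simp only [hM]
    rw [fderiv_comp_eval_single_of_ne (hg i j) hjk, fderiv_comp_eval_single_of_ne (hg i k) hjk.symm]

end PartialDerivatives

theorem triangular_stochastic_volatility_reducible_general
    {𝕜 : Type*} [NontriviallyNormedField 𝕜] {a b c : 𝕜 → 𝕜}
    (ha : Differentiable 𝕜 a) (hb : Differentiable 𝕜 b) (hc : Differentiable 𝕜 c)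
    (hane : ∀ t, a t ≠ 0) (hcne : ∀ t, c t ≠ 0)
    {σ : (Fin 2 → 𝕜) → Matrix (Fin 2) (Fin 2) 𝕜}
    (hσ : ∀ x, σ x = !![a (x 0), a (x 0) * b (x 1); 0, c (x 1)]) :
    (∀ x, IsUnit (σ x)) ∧
    (∀ x, (σ x)⁻¹ = !![1 / a (x 0), -(b (x 1)) / c (x 1); 0, 1 / c (x 1)]) ∧
    (∀ x, ∀ i j k : Fin 2,
      fderiv 𝕜 (fun x => (σ x)⁻¹ i j) x (Pi.single k 1) =
        fderiv 𝕜 (fun x => (σ x)⁻¹ i k) x (Pi.single j 1)) := by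
  have inv_eq (x : Fin 2 → 𝕜) :
      (σ x)⁻¹ = !![1 / a (x 0), -(b (x 1)) / c (x 1); 0, 1 / c (x 1)] := by
    rw [hσ, inv_upperTriangular_fin_two (hane _) (hcne _), ← mul_neg,
      mul_div_mul_left _ _ (hane _)]
  let entry : Fin 2 → Fin 2 → 𝕜 → 𝕜 :=
    ![![fun t => 1 / a t, fun t => -(b t) / c t], ![fun _ => 0, fun t => 1 / c t]]
  have inv_apply (x : Fin 2 → 𝕜) (i j : Fin 2) : (σ x)⁻¹ i j = entry i j (x j) := by
    rw [inv_eq]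
    fin_cases i <;> fin_cases j <;> rfl
  have differentiable_entry (i j : Fin 2) : Differentiable 𝕜 (entry i j) := by
    fin_cases i <;> fin_cases j
    · exact (differentiable_const 1).fun_div ha hane
    · exact hb.fun_neg.fun_div hc hcne
    · exact differentiable_const 0
    · exact (differentiable_const 1).fun_div hc hcne
  refine ⟨fun x => ?_, inv_eq, fun x => ?_⟩
  · exact hσ x ▸ isUnit_upperTriangular_fin_two_iff.2 ⟨hane _, hcne _⟩
  · exact fderiv_single_comm_of_column_eq_comp_eval inv_apply fun i j => differentiable_entry i j _

/-- The triangular stochastic volatility specification of Section 3 of the paper is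
reducible: with `σ(x) = [[a(x₁), a(x₁)b(x₂)], [0, c(x₂)]]` for smooth `a, b, c` with
`a, c` nonvanishing, `σ(x)` is invertible with the stated explicit inverse, and the
reducibility condition (R) holds everywhere. -/
theorem triangular_stochastic_volatility_reducible
    (a b c : ℝ → ℝ)
    (ha : ContDiff ℝ (⊤ : ℕ∞) a) (hb : ContDiff ℝ (⊤ : ℕ∞) b) (hc : ContDiff ℝ (⊤ : ℕ∞) c)
    (hane : ∀ x₁ : ℝ, a x₁ ≠ 0) (hcne : ∀ x₂ : ℝ, c x₂ ≠ 0)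
    (σ : (Fin 2 → ℝ) → Matrix (Fin 2) (Fin 2) ℝ)
    (hσ : ∀ x, σ x = !![a (x 0), a (x 0) * b (x 1); 0, c (x 1)]) :
    (∀ x : Fin 2 → ℝ, IsUnit (σ x)) ∧
    (∀ x : Fin 2 → ℝ,
      (σ x)⁻¹ = !![1 / a (x 0), -(b (x 1)) / c (x 1); 0, 1 / c (x 1)]) ∧
    (∀ x : Fin 2 → ℝ, ∀ i j k : Fin 2,
      pderiv3 (fun x => (σ x)⁻¹ i j) k x = pderiv3 (fun x => (σ x)⁻¹ i k) j x) := by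
  exact triangular_stochastic_volatility_reducible_general (ha.differentiable (by simp))
    (hb.differentiable (by simp)) (hc.differentiable (by simp)) hane hcne hσ
end

section
/- Let m ≥ 1, y₀ ∈ ℝ^m, and let μ : ℝ^m → ℝ^m be continuously differentiable. Define C : ℝ^m → ℝ by C(y) = ∑_{i=1}^m (y_i − y_{0i}) ∫₀¹ μ_i(y₀ + u(y − y₀)) du. Then C is differentiable and for every y ∈ ℝ^m, ⟨∇C(y), y − y₀⟩ = ⟨μ(y), y − y₀⟩, i.e., ∑_{i=1}^m (∂C/∂y_i)(y)(y_i − y_{0i}) = ∑_{i=1}^m μ_i(y)(y_i − y_{0i}). -/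
open scoped RealInnerProductSpace

/-!
`C(y)` is the integral over the segment from `y₀` to `y` of the 1-form `x ↦ ⟪μ x, ·⟫`, and it is
differentiable in `y` by differentiation under the integral sign. Along the ray
`t ↦ y₀ + t (y - y₀)`, the substitution `s = t u` turns it into
`∫₀ᵗ ⟪μ(y₀ + s (y - y₀)), y - y₀⟫ ds`, so the fundamental theorem of calculus at `t = 1` gives its
radial derivative.
-/

open AffineMap MeasureTheory Topology

section ParametricIntegral

variable {X Y H E : Type*} [TopologicalSpace X] [TopologicalSpace Y]
  [NormedAddCommGroup H] [NormedSpace ℝ H] [NormedAddCommGroup E]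

theorem exists_eventually_forall_norm_le_of_continuous {K : Set Y} (hK : IsCompact K)
    {G : X → Y → E} (hG : Continuous (Function.uncurry G)) (x₀ : X) :
    ∃ M, ∀ᶠ x in 𝓝 x₀, ∀ y ∈ K, ‖G x y‖ ≤ M := by
  have hG_slice : Continuous (G x₀) := by fun_prop
  obtain ⟨M, hM⟩ := hK.exists_bound_of_continuousOn hG_slice.continuousOn
  refine ⟨M + 1, hK.eventually_forall_of_forall_eventually fun y hy ↦ ?_⟩
  have h_lt : ‖Function.uncurry G (x₀, y)‖ < M + 1 := (hM y hy).trans_lt (lt_add_one M)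
  exact (hG.norm.continuousAt.eventually_lt_const h_lt).mono fun _ ↦ le_of_lt

theorem hasFDerivAt_intervalIntegral_of_contDiff [NormedSpace ℝ E] {F : H → ℝ → E}
    (hF : ContDiff ℝ 1 (Function.uncurry F)) (a b : ℝ) (x₀ : H) :
    HasFDerivAt (fun x ↦ ∫ t in a..b, F x t) (∫ t in a..b, fderiv ℝ (F · t) x₀) x₀ := by
  have hF_cont (x : H) : Continuous (F x) := hF.continuous.uncurry_left x
  have hF_diff (t : ℝ) : Differentiable ℝ (F · t) :=
    (hF.comp (contDiff_prodMk_left t)).differentiable one_ne_zero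
  have hF'_cont : Continuous fun p : H × ℝ ↦ fderiv ℝ (F · p.2) p.1 := by
    have hF_swap : ContDiff ℝ 1 (Function.uncurry fun (p : H × ℝ) x ↦ F x p.2) :=
      hF.comp (contDiff_snd.prodMk (contDiff_snd.comp contDiff_fst))
    exact (hF_swap.fderiv contDiff_fst (zero_add 1).le).continuous
  obtain ⟨M, hM⟩ := exists_eventually_forall_norm_le_of_continuous
    (G := fun x t ↦ fderiv ℝ (F · t) x) isCompact_uIcc hF'_cont x₀
  have hF'_slice : Continuous fun t ↦ fderiv ℝ (F · t) x₀ := hF'_cont.comp (.prodMk_right x₀)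
  exact intervalIntegral.hasFDerivAt_integral_of_dominated_of_fderiv_le hM
    (.of_forall fun x ↦ (hF_cont x).aestronglyMeasurable)
    ((hF_cont x₀).intervalIntegrable a b)
    hF'_slice.aestronglyMeasurable
    (.of_forall fun t ht x hx ↦ hx t (Set.uIoc_subset_uIcc ht))
    intervalIntegrable_const
    (.of_forall fun t _ x _ ↦ (hF_diff t x).hasFDerivAt)

end ParametricIntegral

section CurveIntegralSegment

variable {E F : Type*} [NormedAddCommGroup E] [NormedSpace ℝ E]
  [NormedAddCommGroup F] [NormedSpace ℝ F] {ω : E → E →L[ℝ] F}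

theorem differentiable_curveIntegral_segment (hω : ContDiff ℝ 1 ω) (a : E) :
    Differentiable ℝ fun b ↦ ∫ᶜ x in .segment a b, ω x := by
  simp only [curveIntegral_segment, lineMap_apply_module']
  refine fun b ↦ (hasFDerivAt_intervalIntegral_of_contDiff ?_ 0 1 b).differentiableAt
  fun_prop

theorem curveIntegral_segment_lineMap (ω : E → E →L[ℝ] F) (a b : E) (t : ℝ) :
    ∫ᶜ x in .segment a (lineMap a b t), ω x = ∫ s in 0..t, ω (lineMap a b s) (b - a) := by
  calc ∫ᶜ x in .segment a (lineMap a b t), ω x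
      = t • ∫ u in 0..1, ω (lineMap a b (u * t)) (b - a) := by
        rw [curveIntegral_segment, ← intervalIntegral.integral_smul]
        simp [lineMap_apply_module', smul_smul]
    _ = ∫ s in 0..t, ω (lineMap a b s) (b - a) := by
        rw [intervalIntegral.smul_integral_comp_mul_right (fun s ↦ ω (lineMap a b s) (b - a)),
          zero_mul, one_mul]

theorem hasDerivAt_curveIntegral_segment_lineMap [CompleteSpace F] (hω : Continuous ω) (a b : E)
    (t : ℝ) :
    HasDerivAt (fun t ↦ ∫ᶜ x in .segment a (lineMap a b t), ω x)
      (ω (lineMap a b t) (b - a)) t := by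
  have h_cont : Continuous fun s : ℝ ↦ ω (lineMap a b s) (b - a) := by
    simp only [lineMap_apply_module']
    fun_prop
  simp only [curveIntegral_segment_lineMap]
  exact (h_cont.integral_hasStrictDerivAt 0 t).hasDerivAt

theorem fderiv_curveIntegral_segment_apply_sub [CompleteSpace F] (hω : Continuous ω) {a b : E}
    (h_diff : DifferentiableAt ℝ (fun y ↦ ∫ᶜ x in .segment a y, ω x) b) :
    fderiv ℝ (fun y ↦ ∫ᶜ x in .segment a y, ω x) b (b - a) = ω b (b - a) := by
  have h_chain : HasDerivAt (fun t : ℝ ↦ ∫ᶜ x in .segment a (lineMap a b t), ω x)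
      (fderiv ℝ (fun y ↦ ∫ᶜ x in .segment a y, ω x) b (b - a)) 1 :=
    h_diff.hasFDerivAt.comp_hasDerivAt_of_eq 1 hasDerivAt_lineMap (lineMap_apply_one a b).symm
  have h_ftc := hasDerivAt_curveIntegral_segment_lineMap hω a b 1
  rw [lineMap_apply_one] at h_ftc
  exact h_chain.unique h_ftc

end CurveIntegralSegment

theorem sum_mul_intervalIntegral_eq_intervalIntegral_inner {ι : Type*} [Fintype ι]
    {f : ℝ → EuclideanSpace ℝ ι} {ν : Measure ℝ} {a b : ℝ}
    (hf : ∀ i, IntervalIntegrable (f · i) ν a b) (v : EuclideanSpace ℝ ι) :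
    ∑ i, v i * ∫ u in a..b, f u i ∂ν = ∫ u in a..b, ⟪f u, v⟫ ∂ν := by
  simp only [PiLp.inner_apply, RCLike.inner_apply, conj_trivial]
  rw [intervalIntegral.integral_finsetSum fun i _ ↦ (hf i).const_mul (v i)]
  simp only [intervalIntegral.integral_const_mul]

theorem line_integral_coefficient_solves_first_order_equation_general
    {E : Type*} [NormedAddCommGroup E] [InnerProductSpace ℝ E] [CompleteSpace E]
    (y₀ : E) {μ : E → E} (hμ : ContDiff ℝ 1 μ) {C : E → ℝ}
    (hC : ∀ y, C y = ∫ u in (0 : ℝ)..1, ⟪μ (y₀ + u • (y - y₀)), y - y₀⟫) :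
    Differentiable ℝ C ∧ ∀ y, ⟪gradient C y, y - y₀⟫ = ⟪μ y, y - y₀⟫ := by
  have hω : ContDiff ℝ 1 fun x ↦ innerSL ℝ (μ x) := (innerSL ℝ).contDiff.comp hμ
  obtain rfl : C = fun y ↦ ∫ᶜ x in .segment y₀ y, innerSL ℝ (μ x) := by
    funext y
    simp only [hC, curveIntegral_segment, lineMap_apply_module', add_comm, innerSL_apply_apply]
  have h_diff := differentiable_curveIntegral_segment hω y₀
  refine ⟨h_diff, fun y ↦ ?_⟩
  rw [inner_gradient_left, fderiv_curveIntegral_segment_apply_sub hω.continuous (h_diff y),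
    innerSL_apply_apply]

/-- Verification that the coefficient `C_Y^{(0)}` defined by the line-integral formula
(21) of the paper, `C(y) = ∑_i (y_i − y_{0i}) ∫₀¹ μ_i(y₀ + u(y − y₀)) du`, solves the
first-order equation `⟨∇C(y), y − y₀⟩ = ⟨μ(y), y − y₀⟩`. -/
theorem line_integral_coefficient_solves_first_order_equation
    (m : ℕ) (hm : 1 ≤ m) (y₀ : EuclideanSpace ℝ (Fin m))
    (μ : EuclideanSpace ℝ (Fin m) → EuclideanSpace ℝ (Fin m))
    (hμ : ContDiff ℝ 1 μ)
    (C : EuclideanSpace ℝ (Fin m) → ℝ)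
    (hC : ∀ y, C y = ∑ i : Fin m,
      (y i - y₀ i) * ∫ u in (0:ℝ)..1, μ (y₀ + u • (y - y₀)) i) :
    Differentiable ℝ C ∧
    ∀ y, ⟪gradient C y, y - y₀⟫ = ⟪μ y, y - y₀⟫ := by
  have hμ_cont := hμ.continuous
  exact line_integral_coefficient_solves_first_order_equation_general y₀ hμ fun y ↦ (hC y).trans <|
    sum_mul_intervalIntegral_eq_intervalIntegral_inner
      (fun i ↦ Continuous.intervalIntegrable (by fun_prop) 0 1) (y - y₀)
end

section
/- Let m ≥ 1, y₀ ∈ ℝ^m, k ≥ 1 an integer, and let G : ℝ^m → ℝ be continuously differentiable. Define C : ℝ^m → ℝ by C(y) = k ∫₀¹ G(y₀ + u(y − y₀)) u^{k−1} du. Then C is differentiable and for every y ∈ ℝ^m, C(y) + (1/k)⟨∇C(y), y − y₀⟩ = G(y). -/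
open scoped RealInnerProductSpace

/-!
Differentiating under the integral sign, the radial moment `∫₀¹ uⁿ G(y₀ + u(y - y₀)) du` has
derivative `∫₀¹ uⁿ⁺¹ G'(y₀ + u(y - y₀)) du`. Applied to `y - y₀`, this integrand is `uⁿ⁺¹ g'(u)`
with `g(u) = G(y₀ + u(y - y₀))`, and integration by parts against `(n + 1) uⁿ g(u)` leaves only
the boundary value `g(1) = G(y)`.
-/

open MeasureTheory Filter Topology Set Function

section ParametricIntegral

-- The tube lemma replaces compactness of balls, so the parameter space may be infinite-dimensional.
theorem exists_eventually_forall_norm_le_of_isCompact {X Y V : Type*} [TopologicalSpace X]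
    [TopologicalSpace Y] [SeminormedAddCommGroup V] {f : X → Y → V}
    (hf : Continuous (uncurry f)) {K : Set Y} (hK : IsCompact K) (x₀ : X) :
    ∃ B, ∀ᶠ x in 𝓝 x₀, ∀ y ∈ K, ‖f x y‖ ≤ B := by
  obtain ⟨B, hB⟩ := hK.exists_bound_of_continuousOn (hf.uncurry_left x₀).continuousOn
  refine ⟨B + 1, hK.eventually_forall_of_forall_eventually fun y hy ↦ ?_⟩
  have norm_lt : ‖uncurry f (x₀, y)‖ < B + 1 := (hB y hy).trans_lt (lt_add_one B)
  exact (hf.norm.continuousAt.eventually_lt_const norm_lt).mono fun _ h ↦ h.le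

theorem hasFDerivAt_intervalIntegral_of_continuous {𝕜 E F : Type*} [RCLike 𝕜]
    [NormedAddCommGroup E] [NormedSpace 𝕜 E]
    [NormedAddCommGroup F] [NormedSpace ℝ F] [NormedSpace 𝕜 F]
    {μ : Measure ℝ} [IsLocallyFiniteMeasure μ] {f : E → ℝ → F} {f' : E → ℝ → E →L[𝕜] F}
    (hf : ∀ x, Continuous (f x)) (hf' : Continuous (uncurry f'))
    (hff' : ∀ x t, HasFDerivAt (fun x ↦ f x t) (f' x t) x) (a b : ℝ) (x₀ : E) :
    HasFDerivAt (fun x ↦ ∫ t in a..b, f x t ∂μ) (∫ t in a..b, f' x₀ t ∂μ) x₀ := by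
  obtain ⟨B, hB⟩ := exists_eventually_forall_norm_le_of_isCompact hf' (isCompact_uIcc (a := a)) x₀
  exact intervalIntegral.hasFDerivAt_integral_of_dominated_of_fderiv_le hB
    (.of_forall fun x ↦ (hf x).aestronglyMeasurable)
    ((hf x₀).intervalIntegrable a b)
    (hf'.uncurry_left x₀).aestronglyMeasurable
    (.of_forall fun t ht _ hx ↦ hx t (uIoc_subset_uIcc ht))
    intervalIntegrable_const
    (.of_forall fun t _ x _ ↦ hff' x t)

end ParametricIntegral

theorem integral_pow_smul_add_integral_pow_succ_smul_deriv {F : Type*} [NormedAddCommGroup F]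
    [NormedSpace ℝ F] [CompleteSpace F] {g g' : ℝ → F}
    (hg : ∀ u ∈ uIcc (0 : ℝ) 1, HasDerivAt g (g' u) u)
    (hg' : IntervalIntegrable g' volume 0 1) (n : ℕ) :
    ((n + 1 : ℕ) : ℝ) • (∫ u in (0 : ℝ)..1, u ^ n • g u) + ∫ u in (0 : ℝ)..1, u ^ (n + 1) • g' u
      = g 1 := by
  have hpow (u : ℝ) : HasDerivAt (fun u ↦ u ^ (n + 1)) (((n + 1 : ℕ) : ℝ) * u ^ n) u :=
    hasDerivAt_pow (n + 1) u
  have hpow' : IntervalIntegrable (fun u : ℝ ↦ ((n + 1 : ℕ) : ℝ) * u ^ n) volume 0 1 :=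
    Continuous.intervalIntegrable (by fun_prop) 0 1
  rw [intervalIntegral.integral_smul_deriv_eq_deriv_smul (fun u _ ↦ hpow u) hg hpow' hg',
    ← intervalIntegral.integral_smul]
  simp [mul_smul]

section Composition

variable {𝕜 E F : Type*} [NontriviallyNormedField 𝕜] [NormedAddCommGroup E] [NormedSpace 𝕜 E]
  [NormedAddCommGroup F] [NormedSpace 𝕜 F] {G : E → F} {G' : E →L[𝕜] F}

theorem hasFDerivAt_comp_homothety {y₀ y : E} {u : 𝕜}
    (hG : HasFDerivAt G G' (y₀ + u • (y - y₀))) :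
    HasFDerivAt (fun y ↦ G (y₀ + u • (y - y₀))) (u • G') y := by
  have homothety_deriv :
      HasFDerivAt (fun y ↦ y₀ + u • (y - y₀)) (u • ContinuousLinearMap.id 𝕜 E) y :=
    (((hasFDerivAt_id y).sub_const y₀).const_smul u).const_add y₀
  exact (hG.comp y homothety_deriv).congr_fderiv (by simp)

theorem hasDerivAt_comp_ray {y₀ v : E} {u : 𝕜}
    (hG : HasFDerivAt G G' (y₀ + u • v)) :
    HasDerivAt (fun u : 𝕜 ↦ G (y₀ + u • v)) (G' v) u := by
  have ray_deriv : HasDerivAt (fun u : 𝕜 ↦ y₀ + u • v) v u := by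
    simpa using ((hasDerivAt_id u).smul_const v).const_add y₀
  exact hG.comp_hasDerivAt u ray_deriv

end Composition

section RadialMoment

variable {E F : Type*} [NormedAddCommGroup E] [NormedSpace ℝ E]
  [NormedAddCommGroup F] [NormedSpace ℝ F]

/-- The `n`-th moment `∫₀¹ uⁿ G(y₀ + u(y - y₀)) du` of `G` along the segment from `y₀` to `y`.
The coefficient `C` of the paper is `k` times the moment of order `k - 1`; leaving out the factor
makes differentiation map moments of `G` to moments of its derivative. -/
noncomputable def radialMoment (n : ℕ) (G : E → F) (y₀ y : E) : F :=
  ∫ u in (0 : ℝ)..1, u ^ n • G (y₀ + u • (y - y₀))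

variable {G : E → F}

theorem hasFDerivAt_radialMoment (hG : ContDiff ℝ 1 G) (n : ℕ) (y₀ y : E) :
    HasFDerivAt (radialMoment n G y₀) (radialMoment (n + 1) (fderiv ℝ G) y₀ y) y := by
  have hG_cont : Continuous G := hG.continuous
  refine hasFDerivAt_intervalIntegral_of_continuous
    (f' := fun y u ↦ u ^ (n + 1) • fderiv ℝ G (y₀ + u • (y - y₀)))
    (fun y ↦ by fun_prop) (by fun_prop) (fun y u ↦ ?_) 0 1 y
  have hG_deriv := (hG.differentiable one_ne_zero (y₀ + u • (y - y₀))).hasFDerivAt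
  simpa only [pow_succ, mul_smul] using (hasFDerivAt_comp_homothety hG_deriv).fun_const_smul (u ^ n)

theorem radialMoment_apply {V : Type*} [NormedAddCommGroup V] [NormedSpace ℝ V]
    {L : E → V →L[ℝ] F} (hL : Continuous L) (n : ℕ) (y₀ y : E) (v : V) :
    radialMoment n L y₀ y v = radialMoment n (fun z ↦ L z v) y₀ y :=
  ContinuousLinearMap.intervalIntegral_apply
    (Continuous.intervalIntegrable (by fun_prop) 0 1) v

theorem smul_radialMoment_add_radialMoment_fderiv [CompleteSpace F] (hG : ContDiff ℝ 1 G)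
    (n : ℕ) (y₀ y : E) :
    ((n + 1 : ℕ) : ℝ) • radialMoment n G y₀ y
      + radialMoment (n + 1) (fderiv ℝ G) y₀ y (y - y₀) = G y := by
  have hG'_cont : Continuous (fderiv ℝ G) := hG.continuous_fderiv one_ne_zero
  have ray_deriv (u : ℝ) : HasDerivAt (fun u : ℝ ↦ G (y₀ + u • (y - y₀)))
      (fderiv ℝ G (y₀ + u • (y - y₀)) (y - y₀)) u :=
    hasDerivAt_comp_ray (hG.differentiable one_ne_zero _).hasFDerivAt
  have ray_deriv_integrable : IntervalIntegrable
      (fun u : ℝ ↦ fderiv ℝ G (y₀ + u • (y - y₀)) (y - y₀)) volume 0 1 :=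
    Continuous.intervalIntegrable (by fun_prop) 0 1
  rw [radialMoment_apply hG'_cont]
  simpa only [radialMoment, one_smul, add_sub_cancel] using
    integral_pow_smul_add_integral_pow_succ_smul_deriv (fun u _ ↦ ray_deriv u)
      ray_deriv_integrable n

theorem radial_integral_coefficient_solves_equation_general [CompleteSpace F]
    (y₀ : E) {k : ℕ} (hk : k ≠ 0) (hG : ContDiff ℝ 1 G) {C : E → F}
    (hC : ∀ y, C y = (k : ℝ) • ∫ u in (0 : ℝ)..1, u ^ (k - 1) • G (y₀ + u • (y - y₀))) :
    Differentiable ℝ C ∧ ∀ y, C y + (1 / (k : ℝ)) • fderiv ℝ C y (y - y₀) = G y := by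
  obtain ⟨n, rfl⟩ := Nat.exists_eq_succ_of_ne_zero hk
  have hC_moment : C = ((n + 1 : ℕ) : ℝ) • radialMoment n G y₀ := funext hC
  have hC_deriv (y : E) :
      HasFDerivAt C (((n + 1 : ℕ) : ℝ) • radialMoment (n + 1) (fderiv ℝ G) y₀ y) y :=
    hC_moment ▸ (hasFDerivAt_radialMoment hG n y₀ y).const_smul _
  refine ⟨fun y ↦ (hC_deriv y).differentiableAt, fun y ↦ ?_⟩
  rw [(hC_deriv y).fderiv, smul_apply, one_div,
    inv_smul_smul₀ (Nat.cast_ne_zero.2 hk), hC_moment]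
  exact smul_radialMoment_add_radialMoment_fderiv hG n y₀ y

end RadialMoment

/-- Verification of the radial-integral formula (22) of the paper: for `k ≥ 1`,
`C(y) = k ∫₀¹ G(y₀ + u(y − y₀)) u^{k−1} du` is differentiable and solves
`C(y) + (1/k)⟨∇C(y), y − y₀⟩ = G(y)`. -/
theorem radial_integral_coefficient_solves_equation
    (m : ℕ) (hm : 1 ≤ m) (y₀ : EuclideanSpace ℝ (Fin m))
    (k : ℕ) (hk : 1 ≤ k)
    (G : EuclideanSpace ℝ (Fin m) → ℝ) (hG : ContDiff ℝ 1 G)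
    (C : EuclideanSpace ℝ (Fin m) → ℝ)
    (hC : ∀ y, C y = (k : ℝ) * ∫ u in (0:ℝ)..1, G (y₀ + u • (y - y₀)) * u ^ (k - 1)) :
    Differentiable ℝ C ∧
    ∀ y, C y + (1 / (k : ℝ)) * ⟪gradient C y, y - y₀⟫ = G y := by
  simpa only [inner_gradient_left, smul_eq_mul] using
    radial_integral_coefficient_solves_equation_general y₀ (Nat.one_le_iff_ne_zero.1 hk) hG
      (fun y ↦ by simpa only [smul_eq_mul, mul_comm] using hC y)
end

section
/- Let β, σ be real 2×2 matrices with tr(β) ≠ 0 and det(β) ≠ 0, and define λ = (1/(2·tr(β)·det(β)))·(det(β)·σσᵀ + (β − tr(β)·I)·σσᵀ·(β − tr(β)·I)ᵀ), where I is the 2×2 identity matrix. Then λ is symmetric and satisfies the Lyapunov equation βλ + λβᵀ = σσᵀ. -/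
open Matrix

/-!
For a `2 × 2` matrix, Cayley–Hamilton amounts to `β + adj β = tr β • 1`, so `β - tr β • 1 = -adj β`
and `λ` is a multiple of `det β • S + adj β * S * (adj β)ᵀ` with `S = σ * σᵀ`. Multiplying by `β` on
the left, or by `βᵀ` on the right, cancels one of the two adjugates, and the sum of the results is
`det β • ((β + adj β) * S + S * (β + adj β)ᵀ) = (2 * tr β * det β) • S`.
-/

theorem isSymm_mul_mul_transpose {m n R : Type*} [Fintype n] [CommSemiring R] {S : Matrix n n R}
    (hS : S.IsSymm) (M : Matrix m n R) : (M * S * Mᵀ).IsSymm := by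
  rw [IsSymm, transpose_mul, transpose_mul, transpose_transpose, hS.eq, Matrix.mul_assoc]

/-- The Lyapunov operator `X ↦ β * X + X * βᵀ`, as a linear map on square matrices. The Lyapunov
equation with right-hand side `S` is `lyapunovMap β X = S`. -/
def lyapunovMap {n R : Type*} [Fintype n] [CommSemiring R] (β : Matrix n n R) :
    Matrix n n R →ₗ[R] Matrix n n R :=
  LinearMap.mulLeft R β + LinearMap.mulRight R βᵀ

theorem lyapunovMap_apply {n R : Type*} [Fintype n] [CommSemiring R] (β X : Matrix n n R) :
    lyapunovMap β X = β * X + X * βᵀ :=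
  rfl

section CommRing

variable {R : Type*} [CommRing R]

theorem lyapunovMap_adjugate_mul_mul_transpose {n : Type*} [Fintype n] [DecidableEq n]
    (β S : Matrix n n R) :
    lyapunovMap β (adjugate β * S * (adjugate β)ᵀ) = det β • lyapunovMap (adjugate β) S := by
  have left_cancel : β * (adjugate β * S * (adjugate β)ᵀ) = det β • (S * (adjugate β)ᵀ) := by
    rw [Matrix.mul_assoc, ← Matrix.mul_assoc, mul_adjugate, Matrix.smul_mul, Matrix.one_mul]
  have right_cancel : adjugate β * S * (adjugate β)ᵀ * βᵀ = det β • (adjugate β * S) := by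
    rw [Matrix.mul_assoc, ← transpose_mul, mul_adjugate, transpose_smul, transpose_one,
      Matrix.mul_smul, Matrix.mul_one]
  rw [lyapunovMap_apply, lyapunovMap_apply, left_cancel, right_cancel, ← smul_add, add_comm]

theorem add_adjugate_fin_two (β : Matrix (Fin 2) (Fin 2) R) :
    β + adjugate β = trace β • (1 : Matrix (Fin 2) (Fin 2) R) := by
  ext i j
  fin_cases i <;> fin_cases j <;> simp [adjugate_fin_two, trace_fin_two, add_comm]

theorem lyapunovMap_add_lyapunovMap_adjugate_fin_two (β S : Matrix (Fin 2) (Fin 2) R) :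
    lyapunovMap β S + lyapunovMap (adjugate β) S = (2 * trace β) • S :=
  calc
    lyapunovMap β S + lyapunovMap (adjugate β) S
      = (β + adjugate β) * S + S * (β + adjugate β)ᵀ := by
        rw [lyapunovMap_apply, lyapunovMap_apply, transpose_add, Matrix.add_mul, Matrix.mul_add,
          add_add_add_comm]
    _ = trace β • S + trace β • S := by
        rw [add_adjugate_fin_two, transpose_smul, transpose_one, Matrix.smul_mul, Matrix.mul_smul,
          Matrix.one_mul, Matrix.mul_one]
    _ = (2 * trace β) • S := by rw [← add_smul, two_mul]

theorem lyapunovMap_det_smul_add_adjugate_fin_two (β S : Matrix (Fin 2) (Fin 2) R) :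
    lyapunovMap β (det β • S + adjugate β * S * (adjugate β)ᵀ) = (2 * trace β * det β) • S := by
  rw [map_add, map_smul, lyapunovMap_adjugate_mul_mul_transpose, ← smul_add,
    lyapunovMap_add_lyapunovMap_adjugate_fin_two, smul_smul, mul_comm]

end CommRing

theorem ou_stationary_covariance_solves_lyapunov_general {K : Type*} [Field K] [NeZero (2 : K)]
    {β S lam : Matrix (Fin 2) (Fin 2) K} (hS : S.IsSymm) (htr : trace β ≠ 0) (hdet : det β ≠ 0)
    (hlam : lam = (1 / (2 * trace β * det β)) •
      (det β • S + (β - trace β • (1 : Matrix (Fin 2) (Fin 2) K)) * S *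
        (β - trace β • (1 : Matrix (Fin 2) (Fin 2) K))ᵀ)) :
    lamᵀ = lam ∧ β * lam + lam * βᵀ = S := by
  have sub_trace : β - trace β • (1 : Matrix (Fin 2) (Fin 2) K) = -adjugate β := by
    rw [← add_adjugate_fin_two, sub_add_cancel_left]
  have coeff_ne_zero : 2 * trace β * det β ≠ 0 := mul_ne_zero (mul_ne_zero two_ne_zero htr) hdet
  rw [sub_trace, transpose_neg, Matrix.neg_mul, neg_mul_neg] at hlam
  subst hlam
  constructor
  · exact ((hS.smul _).add (isSymm_mul_mul_transpose hS _)).smul _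
  · rw [← lyapunovMap_apply, map_smul, lyapunovMap_det_smul_add_adjugate_fin_two, one_div,
      inv_smul_smul₀ coeff_ne_zero]

/-- The explicit stationary variance–covariance matrix (46) of the bivariate
Ornstein–Uhlenbeck model in Section 7.1 of the paper: for 2×2 matrices `β, σ` with
`tr β ≠ 0` and `det β ≠ 0`, the matrix
`λ = (1/(2 tr β det β))(det β · σσᵀ + (β − tr β · I) σσᵀ (β − tr β · I)ᵀ)` is symmetric
and solves the Lyapunov equation `βλ + λβᵀ = σσᵀ`. -/
theorem ou_stationary_covariance_solves_lyapunov
    (β σ lam : Matrix (Fin 2) (Fin 2) ℝ)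
    (htr : Matrix.trace β ≠ 0) (hdet : Matrix.det β ≠ 0)
    (hlam : lam = (1 / (2 * Matrix.trace β * Matrix.det β)) •
      (Matrix.det β • (σ * σᵀ) +
        (β - Matrix.trace β • (1 : Matrix (Fin 2) (Fin 2) ℝ)) * (σ * σᵀ) *
          (β - Matrix.trace β • (1 : Matrix (Fin 2) (Fin 2) ℝ))ᵀ)) :
    lamᵀ = lam ∧ β * lam + lam * βᵀ = σ * σᵀ := by
  exact ou_stationary_covariance_solves_lyapunov_general (isSymm_mul_transpose_self σ) htr hdet hlam
end

section
/- Let m ≥ 1, x₀ ∈ ℝ^m, let v : ℝ^m → M_m(ℝ) be continuous with v(x₀) symmetric and invertible, and let C : ℝ^m → ℝ be C² on a neighborhood of x₀ with C(x₀) = 0 and ∇C(x₀) = 0, satisfying C(x) = −(1/2)·∇C(x)ᵀ·v(x)·∇C(x) for all x in that neighborhood. If the Hessian matrix H of C at x₀ is invertible, then H = −v(x₀)^{-1}. -/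
open Matrix

/-- Partial derivative of a scalar function on `Fin m → ℝ` in the `i`-th coordinate
direction. -/
noncomputable def pd17 {m : ℕ} (f : (Fin m → ℝ) → ℝ) (i : Fin m) (x : Fin m → ℝ) : ℝ :=
  fderiv ℝ f x (Pi.single i 1)

/-!
Along the ray `x₀ + t u`, divide `C = -(1/2) ∇Cᵀ v ∇C` by `t ^ 2` and let `t → 0`. The gradient
vanishes at `x₀`, so `∇C / t → H u` and `C / t ^ 2 → (1/2) uᵀ H u`; since the right-hand side is
quadratic in `∇C`, it tends to `-(1/2) (H u)ᵀ v(x₀) (H u)` without `v` ever being differentiated.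
As `H` and `v(x₀)` are symmetric, polarization gives `H = -H v(x₀) H`, and `H` cancels.
-/

open Filter Topology Module

section Rays

variable {E F : Type*} [NormedAddCommGroup E] [NormedSpace ℝ E]
  [NormedAddCommGroup F] [NormedSpace ℝ F]

theorem tendsto_sub_div_sq_of_hasDerivAt {f f' : ℝ → ℝ} {f'' a : ℝ}
    (hf : ∀ᶠ t in 𝓝 a, HasDerivAt f (f' t) t) (hf' : HasDerivAt f' f'' a) (hf'a : f' a = 0) :
    Tendsto (fun t => (f t - f a) / (t - a) ^ 2) (𝓝[≠] a) (𝓝 (f'' / 2)) := by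
  refine HasDerivAt.lhopital_zero_nhdsNE (f' := f') (g' := fun t => 2 * (t - a)) ?_ ?_ ?_ ?_ ?_ ?_
  · filter_upwards [hf.filter_mono nhdsWithin_le_nhds] with t ht using ht.sub_const _
  · exact .of_forall fun t => by
      simpa using ((hasDerivAt_id t).sub_const a).fun_pow 2
  · filter_upwards [self_mem_nhdsWithin] with t ht
    exact mul_ne_zero two_ne_zero (sub_ne_zero.2 ht)
  · have hcont : ContinuousAt (fun t => f t - f a) a := hf.self_of_nhds.continuousAt.sub_const _
    simpa using hcont.tendsto.mono_left nhdsWithin_le_nhds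
  · have hcont : ContinuousAt (fun t : ℝ => (t - a) ^ 2) a := by fun_prop
    simpa using hcont.tendsto.mono_left nhdsWithin_le_nhds
  · refine (hf'.tendsto_slope.div_const 2).congr fun t => ?_
    rw [slope_def_field, hf'a, sub_zero, div_div, mul_comm]

theorem hasDerivAt_add_smul (x u : E) (t : ℝ) : HasDerivAt (fun s : ℝ => x + s • u) u t := by
  simpa using ((hasDerivAt_id t).smul_const u).const_add x

theorem tendsto_add_smul_nhds_zero (x u : E) : Tendsto (fun t : ℝ => x + t • u) (𝓝 0) (𝓝 x) := by
  simpa using (hasDerivAt_add_smul x u 0).continuousAt.tendsto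

theorem tendsto_inv_smul_ray {f : E → F} {x : E} (hf : DifferentiableAt ℝ f x)
    (hfx : f x = 0) (u : E) :
    Tendsto (fun t : ℝ => t⁻¹ • f (x + t • u)) (𝓝[≠] 0) (𝓝 (fderiv ℝ f x u)) := by
  simpa [hfx] using (hf.hasFDerivAt.hasLineDerivAt u).tendsto_slope_zero

theorem tendsto_sub_div_sq_ray {f : E → ℝ} {x : E}
    (hf : ∀ᶠ y in 𝓝 x, DifferentiableAt ℝ f y) (hf' : DifferentiableAt ℝ (fderiv ℝ f) x)
    (hfx : fderiv ℝ f x = 0) (u : E) :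
    Tendsto (fun t : ℝ => (f (x + t • u) - f x) / t ^ 2) (𝓝[≠] 0)
      (𝓝 (fderiv ℝ (fderiv ℝ f) x u u / 2)) := by
  have hderiv : ∀ᶠ t : ℝ in 𝓝 0,
      HasDerivAt (fun s : ℝ => f (x + s • u)) (fderiv ℝ f (x + t • u) u) t := by
    filter_upwards [(tendsto_add_smul_nhds_zero x u).eventually hf] with t ht
    exact ht.hasFDerivAt.comp_hasDerivAt t (hasDerivAt_add_smul x u t)
  have hderiv' : HasDerivAt (fun t : ℝ => fderiv ℝ f (x + t • u) u)
      (fderiv ℝ (fderiv ℝ f) x u u) 0 := by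
    have hline : HasDerivAt (fun t : ℝ => fderiv ℝ f (x + t • u)) (fderiv ℝ (fderiv ℝ f) x u) 0 :=
      hf'.hasFDerivAt.hasLineDerivAt u
    simpa using hline.clm_apply (hasDerivAt_const (0 : ℝ) u)
  simpa using tendsto_sub_div_sq_of_hasDerivAt hderiv hderiv' (by simp [hfx])

theorem fderiv_fderiv_apply_self_of_eventually_eq_homogeneous {f : E → ℝ} {x : E}
    {Q : E → (E →L[ℝ] ℝ) → ℝ} (hQ : ∀ y (t : ℝ) φ, Q y (t • φ) = t ^ 2 * Q y φ)
    (hf : ∀ᶠ y in 𝓝 x, DifferentiableAt ℝ f y) (hf' : DifferentiableAt ℝ (fderiv ℝ f) x)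
    (hfx : fderiv ℝ f x = 0) (heq : ∀ᶠ y in 𝓝 x, f y = Q y (fderiv ℝ f y)) (u : E)
    (hQcont : ContinuousAt (fun p : E × (E →L[ℝ] ℝ) => Q p.1 p.2)
      (x, fderiv ℝ (fderiv ℝ f) x u)) :
    fderiv ℝ (fderiv ℝ f) x u u / 2 = Q x (fderiv ℝ (fderiv ℝ f) x u) := by
  have hray : Tendsto (fun t : ℝ => x + t • u) (𝓝[≠] 0) (𝓝 x) :=
    (tendsto_add_smul_nhds_zero x u).mono_left nhdsWithin_le_nhds
  have hQ0 : Q x 0 = 0 := by simpa using hQ x 0 0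
  have hfx0 : f x = 0 := by rw [heq.self_of_nhds, hfx, hQ0]
  have hQlim : Tendsto (fun t : ℝ => Q (x + t • u) (t⁻¹ • fderiv ℝ f (x + t • u))) (𝓝[≠] 0)
      (𝓝 (Q x (fderiv ℝ (fderiv ℝ f) x u))) :=
    hQcont.tendsto.comp (hray.prodMk_nhds (tendsto_inv_smul_ray hf' hfx u))
  refine tendsto_nhds_unique (tendsto_sub_div_sq_ray hf hf' hfx u) (hQlim.congr' ?_)
  filter_upwards [hray.eventually heq] with t ht
  rw [hQ, ← ht, hfx0, sub_zero, inv_pow, div_eq_inv_mul]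

end Rays

section Matrices

variable {ι : Type*} [Fintype ι]

theorem eq_of_isSymm_of_dotProduct_mulVec_self_eq {K : Type*} [Field K] [NeZero (2 : K)]
    {A B : Matrix ι ι K} (hA : A.IsSymm) (hB : B.IsSymm)
    (h : ∀ c, c ⬝ᵥ A *ᵥ c = c ⬝ᵥ B *ᵥ c) : A = B := by
  classical
  refine Matrix.toBilin'.injective (LinearMap.BilinForm.ext_of_isSymm
    (isSymm_toBilin'_iff_isSymm.2 hA) (isSymm_toBilin'_iff_isSymm.2 hB) fun c => ?_)
  simpa only [toBilin'_apply'] using h c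

theorem eq_neg_inv_of_eq_neg_mul_mul {R : Type*} [CommRing R] [DecidableEq ι]
    {A B : Matrix ι ι R} (hA : IsUnit A) (h : A = -(A * B * A)) : A = -B⁻¹ := by
  have hBA : B * -A = 1 := hA.mul_left_cancel <| by
    rw [mul_one, mul_neg, mul_neg, ← mul_assoc, ← h]
  rw [inv_eq_right_inv hBA, neg_neg]

end Matrices

section Hessian

variable {ι E : Type*} [NormedAddCommGroup E] [NormedSpace ℝ E]

/-- The matrix of second partial derivatives of `f` at `x` in the directions of the basis `b`. The
row index is the direction of the outer derivative. -/
noncomputable def hessianMatrix (b : Basis ι ℝ E) (f : E → ℝ) (x : E) : Matrix ι ι ℝ :=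
  of fun i j => fderiv ℝ (fun y => fderiv ℝ f y (b j)) x (b i)

variable {b : Basis ι ℝ E} {f : E → ℝ} {x : E}

theorem hessianMatrix_apply (hf' : DifferentiableAt ℝ (fderiv ℝ f) x) (i j : ι) :
    hessianMatrix b f x i j = fderiv ℝ (fderiv ℝ f) x (b i) (b j) := by
  simp [hessianMatrix, fderiv_clm_apply hf' (differentiableAt_const (b j))]

theorem isSymm_hessianMatrix (hf : ∀ᶠ y in 𝓝 x, DifferentiableAt ℝ f y)
    (hf' : DifferentiableAt ℝ (fderiv ℝ f) x) : (hessianMatrix b f x).IsSymm :=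
  .ext fun i j => by
    simpa only [hessianMatrix_apply hf'] using second_derivative_symmetric_of_eventually
      (hf.mono fun _ hy => hy.hasFDerivAt) hf'.hasFDerivAt (b j) (b i)

variable [Fintype ι]

theorem vecMul_hessianMatrix (hf' : DifferentiableAt ℝ (fderiv ℝ f) x) (c : ι → ℝ) :
    c ᵥ* hessianMatrix b f x = fderiv ℝ (fderiv ℝ f) x (∑ i, c i • b i) ∘ b := by
  ext j
  simp [vecMul, dotProduct, hessianMatrix_apply hf']

theorem dotProduct_hessianMatrix_mulVec (hf' : DifferentiableAt ℝ (fderiv ℝ f) x) (c d : ι → ℝ) :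
    c ⬝ᵥ hessianMatrix b f x *ᵥ d =
      fderiv ℝ (fderiv ℝ f) x (∑ i, c i • b i) (∑ j, d j • b j) := by
  rw [dotProduct_mulVec, vecMul_hessianMatrix hf', map_sum (fderiv ℝ (fderiv ℝ f) x _)]
  simp only [dotProduct, Function.comp_apply, map_smul, smul_eq_mul, mul_comm]

variable {v : E → Matrix ι ι ℝ}

theorem fderiv_fderiv_apply_self_eq_neg_dotProduct (hv : ContinuousAt v x)
    (hf : ∀ᶠ y in 𝓝 x, DifferentiableAt ℝ f y) (hf' : DifferentiableAt ℝ (fderiv ℝ f) x)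
    (hfx : fderiv ℝ f x = 0)
    (heq : ∀ᶠ y in 𝓝 x, f y = -(1 / 2) * ((fderiv ℝ f y ∘ b) ⬝ᵥ v y *ᵥ (fderiv ℝ f y ∘ b)))
    (u : E) :
    fderiv ℝ (fderiv ℝ f) x u u =
      -((fderiv ℝ (fderiv ℝ f) x u ∘ b) ⬝ᵥ v x *ᵥ (fderiv ℝ (fderiv ℝ f) x u ∘ b)) := by
  let Q (y : E) (φ : E →L[ℝ] ℝ) : ℝ := -(1 / 2) * ((φ ∘ b) ⬝ᵥ v y *ᵥ (φ ∘ b))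
  have hQ (y : E) (t : ℝ) (φ : E →L[ℝ] ℝ) : Q y (t • φ) = t ^ 2 * Q y φ := by
    have hcomp : ⇑(t • φ) ∘ b = t • (φ ∘ b) := rfl
    simp only [Q, hcomp, mulVec_smul, smul_dotProduct, dotProduct_smul, smul_eq_mul]
    ring
  have hQcont (φ : E →L[ℝ] ℝ) : ContinuousAt (fun p : E × (E →L[ℝ] ℝ) => Q p.1 p.2) (x, φ) := by
    have hform : Continuous fun q : Matrix ι ι ℝ × (ι → ℝ) => -(1 / 2) * (q.2 ⬝ᵥ q.1 *ᵥ q.2) := by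
      fun_prop
    have hcoords : Continuous fun p : E × (E →L[ℝ] ℝ) => p.2 ∘ b :=
      continuous_pi fun i => continuous_snd.clm_apply continuous_const
    exact hform.continuousAt.comp
      ((hv.comp (x := (x, φ)) continuousAt_fst).prodMk hcoords.continuousAt)
  have hhalf : fderiv ℝ (fderiv ℝ f) x u u / 2 =
      -(1 / 2) * ((fderiv ℝ (fderiv ℝ f) x u ∘ b) ⬝ᵥ v x *ᵥ (fderiv ℝ (fderiv ℝ f) x u ∘ b)) :=
    fderiv_fderiv_apply_self_of_eventually_eq_homogeneous hQ hf hf' hfx heq u (hQcont _)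
  linarith

theorem hessianMatrix_eq_neg_mul_mul (hv : ContinuousAt v x) (hvsymm : (v x).IsSymm)
    (hf : ∀ᶠ y in 𝓝 x, DifferentiableAt ℝ f y) (hf' : DifferentiableAt ℝ (fderiv ℝ f) x)
    (hfx : fderiv ℝ f x = 0)
    (heq : ∀ᶠ y in 𝓝 x, f y = -(1 / 2) * ((fderiv ℝ f y ∘ b) ⬝ᵥ v y *ᵥ (fderiv ℝ f y ∘ b))) :
    hessianMatrix b f x = -(hessianMatrix b f x * v x * hessianMatrix b f x) := by
  set H := hessianMatrix b f x
  have hH : H.IsSymm := isSymm_hessianMatrix hf hf'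
  have hHvH : (-(H * v x * H)).IsSymm :=
    IsSymm.neg (by simp only [IsSymm, transpose_mul, hH.eq, hvsymm.eq, mul_assoc])
  refine eq_of_isSymm_of_dotProduct_mulVec_self_eq hH hHvH fun c => ?_
  calc c ⬝ᵥ H *ᵥ c = -((c ᵥ* H) ⬝ᵥ v x *ᵥ (c ᵥ* H)) := by
        rw [dotProduct_hessianMatrix_mulVec hf', vecMul_hessianMatrix hf',
          fderiv_fderiv_apply_self_eq_neg_dotProduct hv hf hf' hfx heq]
    _ = c ⬝ᵥ (-(H * v x * H)) *ᵥ c := by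
        rw [neg_mulVec, dotProduct_neg, ← mulVec_mulVec, ← mulVec_mulVec, dotProduct_mulVec c,
          ← mulVec_transpose H, hH.eq]

theorem hessian_of_leading_coefficient_general [DecidableEq ι]
    (hv : ContinuousAt v x) (hvsymm : (v x).IsSymm)
    (hf : ∀ᶠ y in 𝓝 x, DifferentiableAt ℝ f y) (hf' : DifferentiableAt ℝ (fderiv ℝ f) x)
    (hfx : fderiv ℝ f x = 0)
    (heq : ∀ᶠ y in 𝓝 x, f y = -(1 / 2) * ((fderiv ℝ f y ∘ b) ⬝ᵥ v y *ᵥ (fderiv ℝ f y ∘ b)))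
    (hH : IsUnit (hessianMatrix b f x)) :
    hessianMatrix b f x = -(v x)⁻¹ :=
  eq_neg_inv_of_eq_neg_mul_mul hH (hessianMatrix_eq_neg_mul_mul hv hvsymm hf hf' hfx heq)

end Hessian

section PartialDerivatives

variable {m : ℕ} {f : (Fin m → ℝ) → ℝ} {x : Fin m → ℝ}

theorem fderiv_eq_zero_of_pd17_eq_zero (h : ∀ i, pd17 f i x = 0) : fderiv ℝ f x = 0 :=
  ContinuousLinearMap.coe_injective <|
    (Pi.basisFun ℝ (Fin m)).ext fun i => by simpa [pd17] using h i

theorem sum_pd17_mul_mul_pd17 (A : Matrix (Fin m) (Fin m) ℝ) :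
    ∑ i, ∑ j, pd17 f i x * A i j * pd17 f j x =
      (fderiv ℝ f x ∘ Pi.basisFun ℝ (Fin m)) ⬝ᵥ A *ᵥ (fderiv ℝ f x ∘ Pi.basisFun ℝ (Fin m)) := by
  simp only [pd17, dotProduct, mulVec, Function.comp_apply, Pi.basisFun_apply, Finset.mul_sum,
    mul_assoc]

theorem hessianMatrix_basisFun :
    hessianMatrix (Pi.basisFun ℝ (Fin m)) f x = of fun i j => pd17 (pd17 f j) i x := by
  simp only [hessianMatrix, Pi.basisFun_apply]
  rfl

end PartialDerivatives

/-- The identification in Section 5.1 of the paper of the quadratic term of the leading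
coefficient `C_X^{(−1)}` of the irreducible log-likelihood expansion: if `C` is `C²`
near `x₀` with `C(x₀) = 0`, `∇C(x₀) = 0`, satisfies
`C = −(1/2)∇Cᵀ·v·∇C` near `x₀`, `v` is continuous with `v(x₀)` symmetric and
invertible, and the Hessian `H` of `C` at `x₀` is invertible, then `H = −v(x₀)⁻¹`. -/
theorem hessian_of_leading_coefficient
    (m : ℕ) (hm : 1 ≤ m) (x₀ : Fin m → ℝ)
    (v : (Fin m → ℝ) → Matrix (Fin m) (Fin m) ℝ)
    (hvcont : ∀ i j : Fin m, Continuous fun x => v x i j)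
    (hvsymm : (v x₀)ᵀ = v x₀) (hvinv : IsUnit (v x₀))
    (U : Set (Fin m → ℝ)) (hUopen : IsOpen U) (hx₀U : x₀ ∈ U)
    (C : (Fin m → ℝ) → ℝ) (hC : ContDiffOn ℝ 2 C U)
    (hC0 : C x₀ = 0) (hgrad0 : ∀ i : Fin m, pd17 C i x₀ = 0)
    (heq : ∀ x ∈ U, C x =
      -(1 / 2) * ∑ i : Fin m, ∑ j : Fin m, pd17 C i x * v x i j * pd17 C j x)
    (H : Matrix (Fin m) (Fin m) ℝ)
    (hH : H = Matrix.of fun i j => pd17 (pd17 C j) i x₀)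
    (hHinv : IsUnit H) :
    H = -(v x₀)⁻¹ := by
  have hC₀ : ContDiffAt ℝ 2 C x₀ := hC.contDiffAt (hUopen.mem_nhds hx₀U)
  rw [hH, ← hessianMatrix_basisFun] at hHinv ⊢
  exact hessian_of_leading_coefficient_general (continuous_matrix hvcont).continuousAt hvsymm
    ((hC₀.eventually (by simp)).mono fun _ hx => hx.differentiableAt two_ne_zero)
    ((hC₀.fderiv_right (m := 1) (by norm_num)).differentiableAt one_ne_zero)
    (fderiv_eq_zero_of_pd17_eq_zero hgrad0)
    (eventually_of_mem (hUopen.mem_nhds hx₀U) fun x hx => by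
      rw [heq x hx, sum_pd17_mul_mul_pd17]) hHinv
end
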